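/- Let n entities of radius ρ ≥ 0 move in ℝ^d along 1-Lipschitz trajectories ζ_1, …, ζ_n, and let 1 ≤ x ≤ n−1 be an integer. Then for every index i the function t ↦ σ_i(x,t) is 2-Lipschitz: |σ_i(x,t) − σ_i(x,t')| ≤ 2·|t − t'| for all times t, t'. -/

import Mathlib

open Metric Set

/-- The `x`-separation of entity `i` in the configuration `z` of entities of radius `ρ`:
the `x`-th smallest value of `dist (z i) (z j) - 2ρ` over `j ≠ i`. -/
noncomputable def xSep {d n : ℕ} (ρ : ℝ) (z : Fin n → EuclideanSpace ℝ (Fin d))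
    (x : ℕ) (i : Fin n) : ℝ :=
  sInf {r : ℝ | x ≤ {j : Fin n | j ≠ i ∧ dist (z i) (z j) - 2 * ρ ≤ r}.ncard}

/-- One-sided comparison of the separations at two times. -/
theorem xSep_le_aux {d n : ℕ} (ρ : ℝ) (z w : Fin n → EuclideanSpace ℝ (Fin d))
    (x : ℕ) (hx1 : 1 ≤ x) (hxn : x ≤ n - 1) (i : Fin n) (c : ℝ)
    (h : ∀ j, dist (z i) (z j) ≤ dist (w i) (w j) + c) :
    xSep ρ z x i ≤ xSep ρ w x i + c := by
  unfold xSep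
  rw [← sub_le_iff_le_add]
  apply le_csInf
  · obtain ⟨M, hM⟩ := (Set.finite_range (fun j => dist (w i) (w j) - 2 * ρ)).bddAbove
    refine ⟨M, ?_⟩
    have he : {j : Fin n | j ≠ i ∧ dist (w i) (w j) - 2 * ρ ≤ M} = {i}ᶜ := by
      ext j
      simp only [Set.mem_setOf_eq, Set.mem_compl_iff, Set.mem_singleton_iff]
      exact ⟨fun hj => hj.1, fun hj => ⟨hj, hM ⟨j, rfl⟩⟩⟩
    rw [Set.mem_setOf_eq, he, Set.ncard_compl]
    simpa using hxn
  · intro r hr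
    rw [sub_le_iff_le_add]
    apply csInf_le
    · refine ⟨-(2 * ρ), ?_⟩
      intro s hs
      have hs' : 1 ≤ _ := hx1.trans hs
      obtain ⟨j, hj⟩ := Set.nonempty_of_ncard_ne_zero (Nat.one_le_iff_ne_zero.mp hs')
      have h1 := hj.2
      have h2 : 0 ≤ dist (z i) (z j) := dist_nonneg
      linarith
    · refine le_trans hr (Set.ncard_le_ncard ?_ (Set.toFinite _))
      rintro j ⟨hj, hjr⟩
      refine ⟨hj, ?_⟩
      have := h j
      linarith

theorem stmt13 (d n : ℕ) (ρ : ℝ) (hρ : 0 ≤ ρ)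
    (ζ : Fin n → ℝ → EuclideanSpace ℝ (Fin d))
    (hlip : ∀ i : Fin n, LipschitzWith 1 (ζ i))
    (x : ℕ) (hx1 : 1 ≤ x) (hxn : x ≤ n - 1) :
    ∀ (i : Fin n) (t t' : ℝ),
      |xSep ρ (fun j => ζ j t) x i - xSep ρ (fun j => ζ j t') x i| ≤ 2 * |t - t'| := by
  have key : ∀ (i : Fin n) (t t' : ℝ),
      xSep ρ (fun j => ζ j t) x i ≤ xSep ρ (fun j => ζ j t') x i + 2 * |t - t'| := by
    intro i t t'
    apply xSep_le_aux ρ _ _ x hx1 hxn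
    intro j
    have h1 := (hlip i).dist_le_mul t t'
    have h2 := (hlip j).dist_le_mul t' t
    rw [dist_comm t' t] at h2
    have h3 := dist_triangle4 (ζ i t) (ζ i t') (ζ j t') (ζ j t)
    simp only [NNReal.coe_one, one_mul, Real.dist_eq] at h1 h2
    linarith
  intro i t t'
  have h1 := key i t t'
  have h2 := key i t' t
  rw [abs_sub_comm t' t] at h2
  rw [abs_le]
  constructor <;> linarith
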